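/- arXiv:2504.06078 — 2 statements merged into one kernel-verified Lean document; each statement's English description precedes it below -/
import Mathlib

section
/- Let M be a finite set of time intervals, co2 : M → ℝ an emission-factor function, and w_c, w_f strictly positive reals. For aggregated profiles s : M → ℝ define W(s) = w_c·∑_{i∈M} s(i)·co2(i) + w_f·∑_{i∈M} s(i)² and T(s) = ∑_{i∈M} ( s(i) + (w_c/(2·w_f))·co2(i) )². Then for any set S of profiles s : M → ℝ, an element s* ∈ S minimizes W over S if and only if s* minimizes T over S; in fact W(s) = w_f·T(s) − (w_c²/(4·w_f))·∑_{i∈M} co2(i)² for every s, so the two objectives differ by a positive scaling and an additive constant independent of s. -/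
open Finset

/-- Over a finite set `M` of intervals with emission factors `co2` and strictly positive
weights `w_c`, `w_f`, the weighted objective
`W(s) = w_c·∑ s(i)·co2(i) + w_f·∑ s(i)²` and the shifted sum-of-squares objective
`T(s) = ∑ (s(i) + (w_c/(2·w_f))·co2(i))²` satisfy
`W(s) = w_f·T(s) − (w_c²/(4·w_f))·∑ co2(i)²` for every profile `s`, and hence for any
set `S` of profiles, `s* ∈ S` minimizes `W` over `S` iff it minimizes `T` over `S`. -/
theorem weighted_iff_shifted_sum_of_squares
    (M : Type*) [Fintype M] (co2 : M → ℝ) (w_c w_f : ℝ)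
    (hwc : 0 < w_c) (hwf : 0 < w_f)
    (W T : (M → ℝ) → ℝ)
    (hW : ∀ s : M → ℝ, W s = w_c * ∑ i, s i * co2 i + w_f * ∑ i, (s i) ^ 2)
    (hT : ∀ s : M → ℝ, T s = ∑ i, (s i + (w_c / (2 * w_f)) * co2 i) ^ 2) :
    (∀ s : M → ℝ, W s = w_f * T s - (w_c ^ 2 / (4 * w_f)) * ∑ i, (co2 i) ^ 2) ∧
    (∀ (S : Set (M → ℝ)) (s' : M → ℝ), s' ∈ S →
      ((∀ s ∈ S, W s' ≤ W s) ↔ (∀ s ∈ S, T s' ≤ T s))) := by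
  have key : ∀ s : M → ℝ,
      W s = w_f * T s - (w_c ^ 2 / (4 * w_f)) * ∑ i, (co2 i) ^ 2 := by
    intro s
    rw [hW, hT]
    simp only [Finset.mul_sum]
    rw [← Finset.sum_add_distrib, ← Finset.sum_sub_distrib]
    -- Completing the square, one interval at a time.
    refine Finset.sum_congr rfl fun i _ => ?_
    field_simp
    ring
  refine ⟨key, fun S s' _ => forall₂_congr fun s _ => ?_⟩
  rw [key s', key s, sub_le_sub_iff_right, mul_le_mul_iff_right₀ hwf]
end

section
/- Let M be a finite set of intervals, co2 : M → ℝ, and let P be the nonempty feasible set of the bus charging problem with aggregated-profile map e ↦ s. For strictly positive weights w_c, w_f let β(i) = (w_c/(2·w_f))·co2(i). Then a schedule e* ∈ P minimizes the weighted objective W(e) = w_c·∑_i s(i)·co2(i) + w_f·∑_i s(i)² over P if and only if e* minimizes ∑_{i∈M} ( s(i) + β(i) )² over P; consequently, solving the flattening problem with the fixed extra baseload β added to the aggregated profile yields exactly the optimal solutions of the weighted problem. -/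
open Finset

/-- A schedule assigns an energy to each pair `(j, i)` of a job `j` and an interval `i`
in the availability set `A j` of that job. -/
def Schedule (n m : ℕ) (A : Fin n → Finset (Fin m)) : Type :=
  ((j : Fin n) × {i : Fin m // i ∈ A j}) → ℝ

/-- The feasible set of the bus charging problem. -/
def FeasibleSet (n m : ℕ) (req ℓ : Fin n → ℝ) (A : Fin n → Finset (Fin m)) :
    Set (Schedule n m A) :=
  {e | (∀ j : Fin n, req j ≤ ∑ i ∈ (A j).attach, e ⟨j, i⟩) ∧
       (∀ p : (j : Fin n) × {i : Fin m // i ∈ A j}, 0 ≤ e p ∧ e p ≤ ℓ p.1)}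

/-- The aggregated profile of a schedule: `s(i)` is the total energy charged to all
jobs available in interval `i`. -/
def profile {n m : ℕ} {A : Fin n → Finset (Fin m)} (e : Schedule n m A) (i : Fin m) : ℝ :=
  ∑ j : Fin n, if h : i ∈ A j then e ⟨j, ⟨i, h⟩⟩ else 0

/-- With `β(i) = (w_c/(2·w_f))·co2(i)`, a feasible schedule `e*` minimizes the weighted
objective `W(e) = w_c·∑ s(i)·co2(i) + w_f·∑ s(i)²` over the nonempty feasible set of the
bus charging problem if and only if it minimizes the flattening objective with the fixed
extra baseload `β` added to the aggregated profile, `∑ (s(i) + β(i))²`. -/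
theorem weighted_min_iff_baseload_flattening_min
    (n m : ℕ) (req ℓ : Fin n → ℝ) (A : Fin n → Finset (Fin m))
    (co2 : Fin m → ℝ) (w_c w_f : ℝ) (hwc : 0 < w_c) (hwf : 0 < w_f)
    (hne : (FeasibleSet n m req ℓ A).Nonempty)
    (β : Fin m → ℝ) (hβ : ∀ i, β i = (w_c / (2 * w_f)) * co2 i)
    (W T : Schedule n m A → ℝ)
    (hW : ∀ e, W e = w_c * (∑ i : Fin m, profile e i * co2 i)
                      + w_f * (∑ i : Fin m, (profile e i) ^ 2))
    (hT : ∀ e, T e = ∑ i : Fin m, (profile e i + β i) ^ 2)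
    (e' : Schedule n m A) (he' : e' ∈ FeasibleSet n m req ℓ A) :
    (∀ e ∈ FeasibleSet n m req ℓ A, W e' ≤ W e) ↔
    (∀ e ∈ FeasibleSet n m req ℓ A, T e' ≤ T e) := by
  -- Completing the square, `W` is a positive multiple of `T` up to a constant,
  -- since `w_c * co2 i = 2 * w_f * β i`.
  have key : ∀ e, W e = w_f * T e - w_f * ∑ i, β i ^ 2 := by
    intro e
    rw [hW, hT, ← mul_sub, ← Finset.sum_sub_distrib, Finset.mul_sum, Finset.mul_sum,
      Finset.mul_sum, ← Finset.sum_add_distrib]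
    refine Finset.sum_congr rfl fun i _ => ?_
    rw [hβ]
    field_simp
    ring
  refine forall₂_congr fun e _ => ?_
  rw [key, key, sub_le_sub_iff_right, mul_le_mul_iff_right₀ hwf]
end
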